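/- arXiv:math-ph/9910029 — 2 statements merged into one kernel-verified Lean document; each statement's English description precedes it below -/
import Mathlib

section
/- Let κ > 0. For ξ ∈ ℝ define f_ξ : ℝ → ℂ by f_ξ(x) = √κ·e^{−κx} for x ≥ 0 and f_ξ(x) = −e^{−iξ}·√κ·e^{κx} for x < 0, and its parameter derivative g_ξ(x) = ∂f_ξ/∂ξ(x), which equals i·e^{−iξ}·√κ·e^{κx} for x < 0 and 0 for x > 0. Then the Berry phase ∫₀^{2π} i·(∫_ℝ conj(f_ξ(x))·g_ξ(x) dx) dξ = π. (The geometric phase of Section 3: a loop of the phase ξ of the coupling parameter c around the origin produces the Berry phase π, independently of |c|.) -/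
/-!
The phase factors `exp (iξ)` and `exp (-iξ)` in `conj (f ξ x) * g ξ x` cancel, so the integrand in `x`
is `-i κ exp (2κx)` on the negative half-line and zero elsewhere. Its integral is `-i/2`, hence the
Berry connection is the constant `1/2`, and a full turn of `ξ` gives `2π · 1/2 = π`.
-/


open MeasureTheory

/-- The geometric phase of Section 3: letting the phase `ξ` of the coupling
parameter run once around the circle produces the Berry phase `π`,
independently of `|c|`. -/
theorem gpi_berry_phase
    (κ : ℝ) (hκ : 0 < κ)
    (f g : ℝ → ℝ → ℂ)
    (hf : ∀ ξ x, f ξ x = if 0 ≤ x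
        then (Real.sqrt κ : ℂ) * Real.exp (-κ * x)
        else -Complex.exp (-Complex.I * ξ) * (Real.sqrt κ : ℂ) * Real.exp (κ * x))
    (hg : ∀ ξ x, g ξ x = if 0 ≤ x
        then 0
        else Complex.I * Complex.exp (-Complex.I * ξ) * (Real.sqrt κ : ℂ) * Real.exp (κ * x)) :
    (∫ ξ in (0 : ℝ)..(2 * Real.pi),
        Complex.I * ∫ x : ℝ, (starRingEnd ℂ) (f ξ x) * g ξ x) = (Real.pi : ℂ) := by
  have hinner : ∀ ξ : ℝ, ∫ x : ℝ, (starRingEnd ℂ) (f ξ x) * g ξ x = -Complex.I / 2 := by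
    intro ξ
    have hpt : (fun x : ℝ => (starRingEnd ℂ) (f ξ x) * g ξ x) =
        (Set.Iio (0 : ℝ)).indicator
          (fun x => (-Complex.I * κ) * ((Real.exp (2 * κ * x) : ℝ) : ℂ)) := by
      funext x
      by_cases hx : 0 ≤ x
      · simp [hg, hx]
      · have hxneg : x ∈ Set.Iio (0 : ℝ) := not_le.mp hx
        have hphase : Complex.exp (Complex.I * ξ) * Complex.exp (-Complex.I * ξ) = 1 := by
          rw [← Complex.exp_add]
          simp
        have hsqrt : (Real.sqrt κ : ℂ) * Real.sqrt κ = κ := by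
          rw [← Complex.ofReal_mul, Real.mul_self_sqrt hκ.le]
        have hexp : ((Real.exp (2 * κ * x) : ℝ) : ℂ) = Real.exp (κ * x) * Real.exp (κ * x) := by
          rw [← Complex.ofReal_mul, ← Real.exp_add]
          ring_nf
        have hconj : (starRingEnd ℂ) (Complex.exp (-Complex.I * ξ)) =
            Complex.exp (Complex.I * ξ) := by
          rw [← Complex.exp_conj]
          simp
        rw [Set.indicator_of_mem hxneg, hf, hg, if_neg hx, if_neg hx, map_mul, map_mul, map_neg,
          hconj, Complex.conj_ofReal, Complex.conj_ofReal, hexp]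
        linear_combination
          (-Complex.I * Real.sqrt κ * Real.sqrt κ * Real.exp (κ * x) * Real.exp (κ * x)) * hphase
          + (-Complex.I * Real.exp (κ * x) * Real.exp (κ * x)) * hsqrt
    rw [hpt, integral_indicator measurableSet_Iio, integral_const_mul, integral_complex_ofReal,
      ← integral_Iic_eq_integral_Iio, integral_exp_mul_Iic (by positivity : 0 < 2 * κ)]
    have hκ_ne : (κ : ℂ) ≠ 0 := by exact_mod_cast hκ.ne'
    push_cast
    simp only [mul_zero, Complex.exp_zero]
    field_simp
  simp only [hinner, intervalIntegral.integral_const, sub_zero, Complex.real_smul]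
  push_cast
  linear_combination (-(Real.pi : ℂ)) * Complex.I_mul_I
end

section
/- Let ℓ > 0 and η > 0, and define F(k) := cos(kℓ) + (η/k)·sin(kℓ) for k > 0. Then there exists M₀ such that for every integer m ≥ M₀ there is a unique k_m ∈ (mπ/ℓ, (m + 1/2)π/ℓ] with (−1)^m·F(k_m) = 1, one has (−1)^m·F(k) > 1 for all k ∈ (mπ/ℓ, k_m), and lim_{m→∞} (k_m² − (mπ/ℓ)²) = 4η/ℓ. (Theorem 4.1(c): for β = 0 and Re γ = 0 the generalized Kronig–Penney model has a gap at each energy π²m²/ℓ², with asymptotically constant gap width 8|α|/((4+|γ|²)ℓ), corresponding to η = 2α/(4+|γ|²).) -/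
/-!
Put `y = (kℓ - mπ)/2`, so that `y` runs over `(0, π/4]` as `k` runs over
`(mπ/ℓ, (m + 1/2)π/ℓ]`. The double-angle formulas give
`(-1)^m F(k) - 1 = (2 sin y cos y / k) (η - k tan y)`,
so the sign of `(-1)^m F(k) - 1` is that of `η - k tan y` (`sign_identity`).
The function `k ↦ k tan y` is continuous and strictly increasing, vanishes at `k = mπ/ℓ` and is
equal to `(m + 1/2)π/ℓ` at the right endpoint, so for large `m` it takes the value `η` exactly
once (`exists_root`, `strictMonoOn_mul_tan`).

At the root, `sin y ≤ y ≤ tan y` gives `η cos y ≤ k y ≤ η`. Hence `y → 0`, `k y → η`, and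
`k² - (mπ/ℓ)² = 4 k y / ℓ - 4 y² / ℓ² → 4η/ℓ`.
-/

open Filter

/-- Half of the phase `kℓ`, measured from the `m`-th band edge `mπ`. -/
noncomputable def halfPhase (ℓ : ℝ) (m : ℕ) (k : ℝ) : ℝ := (k * ℓ - m * Real.pi) / 2

lemma halfPhase_nonneg {ℓ : ℝ} (hℓ : 0 < ℓ) {m : ℕ} {k : ℝ} (h : (m : ℝ) * Real.pi / ℓ ≤ k) :
    0 ≤ halfPhase ℓ m k := by
  rw [div_le_iff₀ hℓ] at h
  unfold halfPhase
  linarith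

lemma halfPhase_pos {ℓ : ℝ} (hℓ : 0 < ℓ) {m : ℕ} {k : ℝ} (h : (m : ℝ) * Real.pi / ℓ < k) :
    0 < halfPhase ℓ m k := by
  rw [div_lt_iff₀ hℓ] at h
  unfold halfPhase
  linarith

lemma halfPhase_lt {ℓ : ℝ} (hℓ : 0 < ℓ) {m : ℕ} {k : ℝ}
    (h : k ≤ ((m : ℝ) + 1 / 2) * Real.pi / ℓ) : halfPhase ℓ m k < Real.pi / 2 := by
  rw [le_div_iff₀ hℓ] at h
  have := Real.pi_pos
  unfold halfPhase
  linarith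

lemma strictMonoOn_mul_tan {ℓ : ℝ} (hℓ : 0 < ℓ) (m : ℕ) :
    StrictMonoOn (fun k => k * Real.tan (halfPhase ℓ m k))
      (Set.Icc ((m : ℝ) * Real.pi / ℓ) (((m : ℝ) + 1 / 2) * Real.pi / ℓ)) := by
  intro a ha b hb hab
  have hm : 0 ≤ (m : ℝ) * Real.pi / ℓ := by positivity
  have hpos := Real.pi_pos
  have hya := halfPhase_nonneg hℓ ha.1
  have hyb := halfPhase_lt hℓ hb.2
  have hy : halfPhase ℓ m a < halfPhase ℓ m b := by
    have := mul_lt_mul_of_pos_right hab hℓ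
    unfold halfPhase
    linarith
  have ht : Real.tan (halfPhase ℓ m a) < Real.tan (halfPhase ℓ m b) :=
    Real.tan_lt_tan_of_lt_of_lt_pi_div_two (by linarith) hyb hy
  have ht0 : 0 ≤ Real.tan (halfPhase ℓ m a) :=
    Real.tan_nonneg_of_nonneg_of_le_pi_div_two hya (by linarith)
  have hb0 : 0 < b := by linarith [ha.1]
  calc a * Real.tan (halfPhase ℓ m a) ≤ b * Real.tan (halfPhase ℓ m a) := by gcongr
    _ < b * Real.tan (halfPhase ℓ m b) := by gcongr

lemma exists_root {ℓ η : ℝ} (hℓ : 0 < ℓ) (hη : 0 < η) (m : ℕ)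
    (hm : η ≤ ((m : ℝ) + 1 / 2) * Real.pi / ℓ) :
    ∃ k ∈ Set.Ioc ((m : ℝ) * Real.pi / ℓ) (((m : ℝ) + 1 / 2) * Real.pi / ℓ),
      k * Real.tan (halfPhase ℓ m k) = η := by
  have hpos := Real.pi_pos
  have hle : (m : ℝ) * Real.pi / ℓ ≤ ((m : ℝ) + 1 / 2) * Real.pi / ℓ := by
    gcongr
    linarith
  have hcont : ContinuousOn (fun k => k * Real.tan (halfPhase ℓ m k))
      (Set.Icc ((m : ℝ) * Real.pi / ℓ) (((m : ℝ) + 1 / 2) * Real.pi / ℓ)) := by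
    intro k hk
    have hc : Real.cos (halfPhase ℓ m k) ≠ 0 :=
      (Real.cos_pos_of_mem_Ioo
        ⟨by linarith [halfPhase_nonneg hℓ hk.1], halfPhase_lt hℓ hk.2⟩).ne'
    have h1 : ContinuousAt (halfPhase ℓ m) k := by
      unfold halfPhase
      fun_prop
    exact (continuousAt_id.mul
      (ContinuousAt.comp (f := halfPhase ℓ m) (Real.continuousAt_tan.2 hc) h1)).continuousWithinAt
  have h0 : halfPhase ℓ m ((m : ℝ) * Real.pi / ℓ) = 0 := by
    unfold halfPhase
    field_simp
    ring
  have h1 : halfPhase ℓ m (((m : ℝ) + 1 / 2) * Real.pi / ℓ) = Real.pi / 4 := by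
    unfold halfPhase
    field_simp
    ring
  obtain ⟨k, hk, hkη⟩ := intermediate_value_Ioc hle hcont
    (show η ∈ Set.Ioc _ _ by simpa only [h0, h1, Real.tan_zero, Real.tan_pi_div_four, mul_zero,
      mul_one] using ⟨hη, hm⟩)
  exact ⟨k, hk, hkη⟩

lemma sign_identity {ℓ η : ℝ} (m : ℕ) {k : ℝ} (hk : k ≠ 0)
    (hc : Real.cos (halfPhase ℓ m k) ≠ 0) :
    (-1 : ℝ) ^ m * (Real.cos (k * ℓ) + (η / k) * Real.sin (k * ℓ)) - 1 =
      2 * Real.sin (halfPhase ℓ m k) * Real.cos (halfPhase ℓ m k) / k *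
        (η - k * Real.tan (halfPhase ℓ m k)) := by
  have hkl : k * ℓ = 2 * halfPhase ℓ m k + m * Real.pi := by
    unfold halfPhase
    ring
  have hs : ((-1 : ℝ) ^ m) * (-1) ^ m = 1 := by
    rw [← mul_pow]
    norm_num
  generalize halfPhase ℓ m k = y at *
  rw [hkl, Real.cos_add_nat_mul_pi, Real.sin_add_nat_mul_pi, Real.sin_two_mul, Real.cos_two_mul,
    Real.tan_eq_sin_div_cos]
  have hsc := Real.sin_sq_add_cos_sq y
  calc _ = ((-1 : ℝ) ^ m * (-1) ^ m) * (2 * Real.cos y ^ 2 - 1 +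
        (η / k) * (2 * Real.sin y * Real.cos y)) - 1 := by ring
    _ = (2 * Real.cos y ^ 2 - 2) + (η / k) * (2 * Real.sin y * Real.cos y) := by
        rw [hs]
        ring
    _ = -2 * Real.sin y ^ 2 + (η / k) * (2 * Real.sin y * Real.cos y) := by linarith
    _ = _ := by
        field_simp
        ring

lemma root_bounds {η k y : ℝ} (hk : 0 < k) (h0 : 0 < y) (h1 : y < Real.pi / 2)
    (h : k * Real.tan y = η) : η * Real.cos y ≤ k * y ∧ k * y ≤ η := by
  have hc : 0 < Real.cos y := Real.cos_pos_of_mem_Ioo ⟨by linarith, h1⟩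
  constructor
  · rw [← h, mul_assoc, Real.tan_mul_cos hc.ne']
    exact mul_le_mul_of_nonneg_left (Real.sin_lt h0).le hk.le
  · rw [← h]
    exact mul_le_mul_of_nonneg_left (Real.lt_tan h0 h1).le hk.le

/-- Theorem 4.1(c): for `β = 0` and `Re γ = 0` the generalized Kronig–Penney
model has a gap at each energy `(mπ/ℓ)²`, with asymptotically constant gap
width `4η/ℓ` in the energy variable. -/
theorem generalized_kronig_penney_gap_widths
    (ℓ η : ℝ) (hℓ : 0 < ℓ) (hη : 0 < η)
    (F : ℝ → ℝ)
    (hF : ∀ k : ℝ, F k = Real.cos (k * ℓ) + (η / k) * Real.sin (k * ℓ)) :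
    ∃ M₀ : ℕ, ∃ K : ℕ → ℝ,
      (∀ m : ℕ, M₀ ≤ m →
        K m ∈ Set.Ioc ((m : ℝ) * Real.pi / ℓ) (((m : ℝ) + 1 / 2) * Real.pi / ℓ) ∧
        (-1 : ℝ) ^ m * F (K m) = 1 ∧
        (∀ k' ∈ Set.Ioc ((m : ℝ) * Real.pi / ℓ) (((m : ℝ) + 1 / 2) * Real.pi / ℓ),
          (-1 : ℝ) ^ m * F k' = 1 → k' = K m) ∧
        (∀ k ∈ Set.Ioo ((m : ℝ) * Real.pi / ℓ) (K m), 1 < (-1 : ℝ) ^ m * F k)) ∧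
      Tendsto (fun m : ℕ => (K m) ^ 2 - ((m : ℝ) * Real.pi / ℓ) ^ 2)
        atTop (nhds (4 * η / ℓ)) := by
  -- `M₀` is chosen so that `k tan y` is at least `η` at the right end of the interval.
  obtain ⟨M₀, hM₀⟩ := exists_nat_ge (η * ℓ / Real.pi)
  have hpi := Real.pi_pos
  have hlarge : ∀ m : ℕ, M₀ ≤ m → η ≤ ((m : ℝ) + 1 / 2) * Real.pi / ℓ := by
    intro m hm
    have hm' : (M₀ : ℝ) ≤ m := by exact_mod_cast hm
    rw [div_le_iff₀ hpi] at hM₀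
    rw [le_div_iff₀ hℓ]
    nlinarith
  have hex : ∀ m : ℕ, ∃ k : ℝ, M₀ ≤ m →
      k ∈ Set.Ioc ((m : ℝ) * Real.pi / ℓ) (((m : ℝ) + 1 / 2) * Real.pi / ℓ) ∧
        k * Real.tan (halfPhase ℓ m k) = η := by
    intro m
    by_cases hm : M₀ ≤ m
    · obtain ⟨k, hk, hkη⟩ := exists_root hℓ hη m (hlarge m hm)
      exact ⟨k, fun _ => ⟨hk, hkη⟩⟩
    · exact ⟨0, fun h => absurd h hm⟩
  choose K hK using hex
  have hkpos : ∀ (m : ℕ) (k : ℝ), (m : ℝ) * Real.pi / ℓ < k → 0 < k := fun m k h =>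
    lt_of_le_of_lt (by positivity) h
  have hsign : ∀ (m : ℕ), ∀ k ∈
      Set.Ioc ((m : ℝ) * Real.pi / ℓ) (((m : ℝ) + 1 / 2) * Real.pi / ℓ),
      ∃ c : ℝ, 0 < c ∧
        (-1 : ℝ) ^ m * F k - 1 = c * (η - k * Real.tan (halfPhase ℓ m k)) := by
    intro m k hk
    have h0 := halfPhase_pos hℓ hk.1
    have h1 := halfPhase_lt hℓ hk.2
    have hc : 0 < Real.cos (halfPhase ℓ m k) :=
      Real.cos_pos_of_mem_Ioo ⟨by linarith, h1⟩
    have hs : 0 < Real.sin (halfPhase ℓ m k) := Real.sin_pos_of_pos_of_lt_pi h0 (by linarith)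
    have hk0 := hkpos m k hk.1
    refine ⟨2 * Real.sin (halfPhase ℓ m k) * Real.cos (halfPhase ℓ m k) / k, by positivity, ?_⟩
    rw [hF]
    exact sign_identity m hk0.ne' hc.ne'
  refine ⟨M₀, K, ?_, ?_⟩
  · intro m hm
    obtain ⟨hKm, hroot⟩ := hK m hm
    have hmono := strictMonoOn_mul_tan hℓ m
    refine ⟨hKm, ?_, ?_, ?_⟩
    · obtain ⟨c, -, h⟩ := hsign m _ hKm
      rw [hroot, sub_self, mul_zero] at h
      linarith
    · intro k hk hFk
      obtain ⟨c, hc, h⟩ := hsign m k hk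
      rw [hFk, sub_self, eq_comm, mul_eq_zero] at h
      have h' := h.resolve_left hc.ne'
      refine hmono.injOn (Set.Ioc_subset_Icc_self hk) (Set.Ioc_subset_Icc_self hKm) ?_
      linarith
    · intro k hk
      have hk' : k ∈ Set.Ioc ((m : ℝ) * Real.pi / ℓ) (((m : ℝ) + 1 / 2) * Real.pi / ℓ) :=
        ⟨hk.1, hk.2.le.trans hKm.2⟩
      obtain ⟨c, hc, h⟩ := hsign m k hk'
      have hlt := hmono (Set.Ioc_subset_Icc_self hk') (Set.Ioc_subset_Icc_self hKm) hk.2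
      simp only [hroot] at hlt
      have := mul_pos hc (sub_pos.2 hlt)
      linarith
  · have hb : ∀ᶠ m : ℕ in atTop, 0 < halfPhase ℓ m (K m) ∧
        (m : ℝ) * Real.pi / ℓ < K m ∧
        η * Real.cos (halfPhase ℓ m (K m)) ≤ K m * halfPhase ℓ m (K m) ∧
        K m * halfPhase ℓ m (K m) ≤ η := by
      filter_upwards [eventually_ge_atTop M₀] with m hm
      obtain ⟨hKm, hroot⟩ := hK m hm
      have h0 := halfPhase_pos hℓ hKm.1
      exact ⟨h0, hKm.1,
        root_bounds (hkpos m _ hKm.1) h0 (halfPhase_lt hℓ hKm.2) hroot⟩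
    have hy : Tendsto (fun m : ℕ => halfPhase ℓ m (K m)) atTop (nhds 0) := by
      have hlim : Tendsto (fun m : ℕ => (η * ℓ / Real.pi) / (m : ℝ)) atTop (nhds 0) :=
        tendsto_const_div_atTop_nhds_zero_nat _
      refine tendsto_of_tendsto_of_tendsto_of_le_of_le' tendsto_const_nhds hlim ?_ ?_
      · filter_upwards [hb] with m hm using hm.1.le
      · filter_upwards [hb, eventually_gt_atTop 0] with m hm hm0
        have hm0' : (0 : ℝ) < m := by exact_mod_cast hm0
        have h2 : (m : ℝ) * Real.pi / ℓ * halfPhase ℓ m (K m) ≤ η :=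
          (mul_le_mul_of_nonneg_right hm.2.1.le hm.1.le).trans hm.2.2.2
        rw [le_div_iff₀ hm0', le_div_iff₀ hpi]
        rw [div_mul_eq_mul_div, div_le_iff₀ hℓ] at h2
        linarith
    have hky : Tendsto (fun m : ℕ => K m * halfPhase ℓ m (K m)) atTop (nhds η) := by
      have hlow : Tendsto (fun m : ℕ => η * Real.cos (halfPhase ℓ m (K m))) atTop (nhds η) := by
        have := ((Real.continuous_cos.tendsto 0).comp hy).const_mul η
        simpa using this
      refine tendsto_of_tendsto_of_tendsto_of_le_of_le' hlow tendsto_const_nhds ?_ ?_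
      · filter_upwards [hb] with m hm using hm.2.2.1
      · filter_upwards [hb] with m hm using hm.2.2.2
    have hlim := (hky.const_mul (4 / ℓ)).sub ((hy.pow 2).const_mul (4 / ℓ ^ 2))
    have hval : 4 / ℓ * η - 4 / ℓ ^ 2 * 0 ^ 2 = 4 * η / ℓ := by ring
    rw [hval] at hlim
    refine hlim.congr fun m => ?_
    unfold halfPhase
    field_simp
    ring
end
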